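/- arXiv:1607.06573 — 2 statements merged into one kernel-verified Lean document; each statement's English description precedes it below -/
import Mathlib

section
/- Let ℓ be a prime with ℓ ≡ 7 (mod 12). Then there exist no integers X, Y, Z with X ≡ Y ≡ Z ≡ 1 (mod 12) and X² + Y² + Z² = 3ℓ². -/
theorem aux_prime_dvd (p : ℕ) (hp : p.Prime) (h : p % 3 = 2) (a b : ℤ)
    (hd : (p : ℤ) ∣ a ^ 2 + a * b + b ^ 2) : (p : ℤ) ∣ a ∧ (p : ℤ) ∣ b := by
  have : Fact p.Prime := ⟨hp⟩
  rw [← ZMod.intCast_zmod_eq_zero_iff_dvd] at hd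
  rw [← ZMod.intCast_zmod_eq_zero_iff_dvd, ← ZMod.intCast_zmod_eq_zero_iff_dvd]
  push_cast at hd
  generalize (a : ZMod p) = s at *
  generalize (b : ZMod p) = t at *
  obtain ⟨k, hk⟩ : ∃ k, p = 3 * k + 2 := ⟨p / 3, by omega⟩
  have h3 : s ^ 3 = t ^ 3 := by linear_combination (s - t) * hd
  have key : ∀ c : ZMod p, (c ^ 3) ^ (k + 1) = c ^ 2 := by
    intro c
    have h1 : c ^ p = c := ZMod.pow_card c
    have h2 : (c ^ 3) ^ (k + 1) = c ^ p * c := by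
      rw [← pow_mul, ← pow_succ]
      congr 1
      omega
    rw [h2, h1, sq]
  have h2 : s ^ 2 = t ^ 2 := by rw [← key s, ← key t, h3]
  have h4 : s ^ 2 * (s - t) = 0 := by linear_combination h3 - t * h2
  have hs : s = 0 := by
    rcases mul_eq_zero.mp h4 with h5 | h5
    · exact pow_eq_zero_iff (two_ne_zero) |>.mp h5
    · have h6 : t = s := (sub_eq_zero.mp h5).symm
      subst h6
      have h7 : (3 : ZMod p) * t ^ 2 = 0 := by linear_combination hd
      rcases mul_eq_zero.mp h7 with h8 | h8
      · exfalso
        have h9 : ((3 : ℕ) : ZMod p) = 0 := by exact_mod_cast h8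
        rw [ZMod.natCast_eq_zero_iff] at h9
        have := (Nat.prime_dvd_prime_iff_eq hp Nat.prime_three).mp h9
        omega
      · exact pow_eq_zero_iff (two_ne_zero) |>.mp h8
  refine ⟨hs, ?_⟩
  subst hs
  exact pow_eq_zero_iff (two_ne_zero) |>.mp (show t ^ 2 = 0 by linear_combination hd)

theorem aux_exists_prime (u : ℕ) (h : u % 3 = 2) : ∃ p : ℕ, p.Prime ∧ p % 3 = 2 ∧ p ∣ u := by
  induction u using Nat.strong_induction_on with
  | _ u ih =>
    obtain ⟨p, hp, k, rfl⟩ := Nat.exists_prime_and_dvd (show u ≠ 1 by omega)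
    by_cases hp3 : p % 3 = 2
    · exact ⟨p, hp, hp3, Dvd.intro _ rfl⟩
    · have hk : k % 3 = 2 := by
        have h1 := Nat.mul_mod p k 3
        have : p % 3 = 0 ∨ p % 3 = 1 := by omega
        rcases this with h2 | h2 <;> rw [h2] at h1 <;> omega
      have hlt : k < p * k := by
        have := hp.two_le
        have : 0 < k := by omega
        nlinarith
      obtain ⟨q, hq, hq3, hqd⟩ := ih k hlt hk
      exact ⟨q, hq, hq3, Dvd.dvd.mul_left hqd p⟩

theorem aux_norm (u : ℕ) : ∀ (w : ℕ) (a b : ℤ), Nat.Coprime u w →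
    (u : ℤ) * w = a ^ 2 + a * b + b ^ 2 → u % 3 ≠ 2 := by
  induction u using Nat.strong_induction_on with
  | _ u ih =>
    intro w a b hc he hu
    obtain ⟨p, hp, hp3, hpu⟩ := aux_exists_prime u hu
    have hpu' : (p : ℤ) ∣ u := by exact_mod_cast hpu
    obtain ⟨⟨c, rfl⟩, ⟨d, rfl⟩⟩ := aux_prime_dvd p hp hp3 a b (he ▸ Dvd.dvd.mul_right hpu' _)
    have h1 : p ^ 2 ∣ u * w := by
      have : ((p ^ 2 : ℕ) : ℤ) ∣ ((u * w : ℕ) : ℤ) := by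
        push_cast
        exact ⟨c ^ 2 + c * d + d ^ 2, by rw [he]; ring⟩
      exact_mod_cast this
    have hpw : Nat.Coprime (p ^ 2) w := Nat.Coprime.pow_left 2 (Nat.Coprime.coprime_dvd_left hpu hc)
    obtain ⟨v, rfl⟩ := hpw.dvd_of_dvd_mul_right h1
    have hp2 := hp.two_le
    have hv : 0 < v := by
      rcases Nat.eq_zero_or_pos v with h | h
      · subst h; simp at hu
      · exact h
    have hlt : v < p ^ 2 * v := by
      have h4 : 4 ≤ p ^ 2 := by nlinarith
      nlinarith
    refine ih v hlt w c d (Nat.Coprime.coprime_dvd_left (Dvd.intro_left _ rfl) hc) ?_ ?_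
    · have hp0 : ((p : ℤ) ^ 2) ≠ 0 := by positivity
      apply mul_left_cancel₀ hp0
      push_cast at he
      linear_combination he
    · have h2 : p ^ 2 % 3 = 1 := by simp [Nat.pow_mod, hp3]
      rw [Nat.mul_mod, h2] at hu
      omega

theorem no_solution_one_mod_twelve (ℓ : ℕ) (hℓ : ℓ.Prime) (h12 : ℓ % 12 = 7) :
    ¬ ∃ X Y Z : ℤ, X % 12 = 1 ∧ Y % 12 = 1 ∧ Z % 12 = 1 ∧
      X ^ 2 + Y ^ 2 + Z ^ 2 = 3 * (ℓ : ℤ) ^ 2 := by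
  rintro ⟨X, Y, Z, hX, hY, hZ, h⟩
  obtain ⟨x, rfl⟩ : ∃ x, X = 12 * x + 1 := ⟨X / 12, by omega⟩
  obtain ⟨y, rfl⟩ : ∃ y, Y = 12 * y + 1 := ⟨Y / 12, by omega⟩
  obtain ⟨z, rfl⟩ : ∃ z, Z = 12 * z + 1 := ⟨Z / 12, by omega⟩
  obtain ⟨m, hm⟩ : ∃ m : ℤ, (ℓ : ℤ) = 12 * m + 7 := ⟨(ℓ : ℤ) / 12, by omega⟩
  obtain ⟨u, hu⟩ : ∃ u : ℤ, u = 6 * m + 3 - 2 * (x + y + z) := ⟨_, rfl⟩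
  obtain ⟨a, ha⟩ : ∃ a : ℤ, a = x - y := ⟨_, rfl⟩
  obtain ⟨b, hb⟩ : ∃ b : ℤ, b = y - z := ⟨_, rfl⟩
  have huv : u * (6 * m + 4 + 2 * (x + y + z)) = 8 * (a ^ 2 + a * b + b ^ 2) := by
    rw [hm] at h
    subst hu ha hb
    linarith
  have hcop : IsCoprime (8 : ℤ) u := by
    have : IsCoprime (2 : ℤ) u := ⟨-(u / 2), 1, by omega⟩
    have h8 := this.pow_left (m := 3)
    norm_num at h8
    exact h8
  obtain ⟨w, hw⟩ := hcop.dvd_of_dvd_mul_left (Dvd.intro _ huv.symm)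
  have he : u * w = a ^ 2 + a * b + b ^ 2 := by
    rw [hw] at huv
    linarith
  have hsum : u + 8 * w = ℓ := by omega
  have hlpos : 0 < ℓ := hℓ.pos
  have hN : 0 ≤ a ^ 2 + a * b + b ^ 2 := by nlinarith [sq_nonneg (a + b), sq_nonneg a, sq_nonneg b]
  have hw0 : w ≠ 0 := by
    rintro rfl
    have hb0 : b = 0 := by nlinarith [sq_nonneg (2 * a + b), sq_nonneg b]
    have ha0 : a = 0 := by
      subst hb0
      nlinarith [sq_nonneg a]
    omega
  have hu0 : u ≠ 0 := by omega
  have hwp : 0 < w := by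
    by_contra hneg
    have h1 : w < 0 := by omega
    have h2 : 0 < u := by omega
    nlinarith
  have hup : 0 < u := by
    by_contra hneg
    have h1 : u < 0 := by omega
    nlinarith
  clear hu0 hw0 hN
  lift u to ℕ using hup.le
  lift w to ℕ using hwp.le
  have hsumN : u + 8 * w = ℓ := by exact_mod_cast hsum
  have hc : Nat.Coprime u w := by
    have hg : Nat.gcd u w ∣ ℓ := by
      rw [← hsumN]
      exact Nat.dvd_add (Nat.gcd_dvd_left _ _) (Dvd.dvd.mul_left (Nat.gcd_dvd_right _ _) _)
    rcases (Nat.dvd_prime hℓ).mp hg with h1 | h1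
    · exact h1
    · have := Nat.le_of_dvd (by omega) (Nat.gcd_dvd_left u w)
      omega
  have hu3 := aux_norm u w a b hc he
  have hw3 := aux_norm w u a b hc.symm (by rw [mul_comm]; exact he)
  have hw3' : w % 3 = 0 := by omega
  have h3 : (3 : ℤ) ∣ (a - b) ^ 2 := by
    obtain ⟨k, hk⟩ : ∃ k : ℤ, (w : ℤ) = 3 * k := ⟨(w : ℤ) / 3, by omega⟩
    rw [hk] at he
    exact ⟨u * k - a * b, by linear_combination -he⟩
  have h3' : (3 : ℤ) ∣ a - b := Int.prime_three.dvd_of_dvd_pow h3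
  omega
end

section
/- Let m ≥ 3 be an odd integer. Then for every prime p and every natural number n, there exist x, y, z in the ring ℤ_p of p-adic integers such that (2(m−2)x + (m−4))² + (2(m−2)y + (m−4))² + (2(m−2)z + (m−4))² = 8(m−2)n + 3(m−4)². In other words, every integer 8(m−2)n + 3(m−4)² is represented locally at every prime by the lattice coset associated to P_m. -/
theorem quad_hensel {p : ℕ} [Fact p.Prime] (A B C a : ℤ_[p])
    (h1 : ‖A * a ^ 2 + B * a + C‖ < 1) (h2 : IsUnit (2 * A * a + B)) :
    ∃ x : ℤ_[p], A * x ^ 2 + B * x + C = 0 := by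
  have h2' : ‖2 * A * a + B‖ = 1 := PadicInt.isUnit_iff.mp h2
  let F : Polynomial ℤ_[p] := Polynomial.C A * Polynomial.X ^ 2 + Polynomial.C B * Polynomial.X
    + Polynomial.C C
  have e : ∀ x : ℤ_[p], F.aeval x = A * x ^ 2 + B * x + C := by
    intro x
    simp [F]
  have d : F.derivative.aeval a = 2 * A * a + B := by
    simp [F]
    ring
  obtain ⟨z, hz, -⟩ := hensels_lemma (F := F) (a := a) (by rw [e, d, h2']; simpa using h1)
  exact ⟨z, by rw [← e, hz]⟩

theorem int_unit {p : ℕ} [hp : Fact p.Prime] (k : ℤ) (h : ¬ (p : ℤ) ∣ k) :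
    IsUnit (k : ℤ_[p]) := by
  rw [PadicInt.isUnit_iff]
  have h1 := (PadicInt.norm_int_lt_one_iff_dvd (p := p) k).not.mpr h
  exact le_antisymm (PadicInt.norm_le_one _) (not_lt.mp h1)

theorem local_representation_odd_case
    (m : ℤ) (hm : 3 ≤ m) (hodd : Odd m) :
    ∀ (p : ℕ) [Fact p.Prime] (n : ℕ), ∃ x y z : ℤ_[p],
      (((2 * (m - 2) : ℤ) : ℤ_[p]) * x + ((m - 4 : ℤ) : ℤ_[p])) ^ 2 +
      (((2 * (m - 2) : ℤ) : ℤ_[p]) * y + ((m - 4 : ℤ) : ℤ_[p])) ^ 2 +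
      (((2 * (m - 2) : ℤ) : ℤ_[p]) * z + ((m - 4 : ℤ) : ℤ_[p])) ^ 2 =
        ((8 * (m - 2) * (n : ℤ) + 3 * (m - 4) ^ 2 : ℤ) : ℤ_[p]) := by
  intro p hp n
  have key : ∀ x : ℤ_[p], ((m - 2 : ℤ) : ℤ_[p]) * x ^ 2 + ((m - 4 : ℤ) : ℤ_[p]) * x
      + ((-2 * n : ℤ) : ℤ_[p]) = 0 → ∃ x y z : ℤ_[p],
      (((2 * (m - 2) : ℤ) : ℤ_[p]) * x + ((m - 4 : ℤ) : ℤ_[p])) ^ 2 +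
      (((2 * (m - 2) : ℤ) : ℤ_[p]) * y + ((m - 4 : ℤ) : ℤ_[p])) ^ 2 +
      (((2 * (m - 2) : ℤ) : ℤ_[p]) * z + ((m - 4 : ℤ) : ℤ_[p])) ^ 2 =
        ((8 * (m - 2) * (n : ℤ) + 3 * (m - 4) ^ 2 : ℤ) : ℤ_[p]) := by
    intro x hx
    refine ⟨x, 0, 0, ?_⟩
    push_cast at hx ⊢
    linear_combination 4 * ((m : ℤ_[p]) - 2) * hx
  by_cases h2 : p = 2
  · subst h2
    have hu : IsUnit ((m - 4 : ℤ) : ℤ_[2]) := by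
      apply int_unit
      obtain ⟨t, rfl⟩ := hodd
      push_cast
      omega
    obtain ⟨x, hx⟩ := quad_hensel ((m - 2 : ℤ) : ℤ_[2]) ((m - 4 : ℤ) : ℤ_[2])
      ((-2 * n : ℤ) : ℤ_[2]) 0 (by
        have := (PadicInt.norm_int_lt_one_iff_dvd (p := 2) (-2 * n)).mpr ⟨-n, by push_cast; ring⟩
        simpa using this) (by simpa using hu)
    exact key x hx
  have hp2 : ¬ (p : ℤ) ∣ 2 := by
    intro h
    have h' : p ∣ 2 := by exact_mod_cast h
    exact h2 ((Nat.prime_dvd_prime_iff_eq hp.out Nat.prime_two).mp h')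
  have u2 : IsUnit (2 : ℤ_[p]) := by simpa using int_unit (p := p) 2 hp2
  by_cases hk : (p : ℤ) ∣ m - 2
  · have hc : ¬ (p : ℤ) ∣ m - 4 := by
      intro h
      apply hp2
      have := dvd_sub hk h
      ring_nf at this
      exact this
    obtain ⟨r, hr⟩ := (int_unit (p := p) _ hc).exists_right_inv
    have hn := (PadicInt.norm_int_lt_one_iff_dvd (p := p) _).mpr hk
    set a : ℤ_[p] := 2 * n * r
    obtain ⟨x, hx⟩ := quad_hensel ((m - 2 : ℤ) : ℤ_[p]) ((m - 4 : ℤ) : ℤ_[p])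
      ((-2 * n : ℤ) : ℤ_[p]) a (by
        have : ((m - 2 : ℤ) : ℤ_[p]) * a ^ 2 + ((m - 4 : ℤ) : ℤ_[p]) * a
          + ((-2 * n : ℤ) : ℤ_[p]) = ((m - 2 : ℤ) : ℤ_[p]) * a ^ 2 := by
          simp only [a]
          push_cast at hr ⊢
          linear_combination 2 * (n : ℤ_[p]) * hr
        rw [this, norm_mul]
        exact lt_of_le_of_lt (mul_le_of_le_one_right (norm_nonneg _) (PadicInt.norm_le_one _)) hn)
      (by
        by_contra hcon
        have h3 := PadicInt.mem_nonunits.mp hcon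
        have h4 : ((m - 4 : ℤ) : ℤ_[p]) ∈ nonunits ℤ_[p] := by
          have h5 : ((m - 2 : ℤ) : ℤ_[p]) ∈ nonunits ℤ_[p] := PadicInt.mem_nonunits.mpr hn
          rw [← IsLocalRing.mem_maximalIdeal] at h5 ⊢
          have h6 : 2 * ((m - 2 : ℤ) : ℤ_[p]) * a + ((m - 4 : ℤ) : ℤ_[p]) ∈
            IsLocalRing.maximalIdeal ℤ_[p] := (IsLocalRing.mem_maximalIdeal _).mpr hcon
          have h7 := Ideal.sub_mem _ h6 (Ideal.mul_mem_left _ (2 * a) h5)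
          convert h7 using 1
          ring
        exact h4 (int_unit (p := p) _ hc))
    exact key x hx
  · have uk : IsUnit ((2 * (m - 2) : ℤ) : ℤ_[p]) := by
      have := u2.mul (int_unit (p := p) _ hk)
      push_cast at this ⊢
      exact this
    obtain ⟨r, hr⟩ := uk.exists_right_inv
    set N : ℤ := 8 * (m - 2) * (n : ℤ) + 3 * (m - 4) ^ 2 with hN
    obtain ⟨a, b, -, -, hab⟩ := Nat.sq_add_sq_zmodEq p (N - 1)
    obtain ⟨d, hd⟩ := quad_hensel (1 : ℤ_[p]) 0 (((a : ℤ) ^ 2 + (b : ℤ) ^ 2 - N : ℤ) : ℤ_[p]) 1 (by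
        have h := (PadicInt.norm_int_lt_one_iff_dvd (p := p) _).mpr hab.symm.dvd
        convert h using 2
        push_cast
        ring) (by simpa using u2)
    have surj : ∀ w : ℤ_[p], ((2 * (m - 2) : ℤ) : ℤ_[p]) * (r * (w - ((m - 4 : ℤ) : ℤ_[p])))
        + ((m - 4 : ℤ) : ℤ_[p]) = w := by
      intro w
      linear_combination (w - ((m - 4 : ℤ) : ℤ_[p])) * hr
    refine ⟨r * ((a : ℤ_[p]) - ((m - 4 : ℤ) : ℤ_[p])), r * ((b : ℤ_[p]) - ((m - 4 : ℤ) : ℤ_[p])),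
      r * (d - ((m - 4 : ℤ) : ℤ_[p])), ?_⟩
    rw [surj, surj, surj]
    clear_value N
    push_cast at hd
    linear_combination hd
end
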